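/- For every n ∈ ℕ and every real β > 1, the Fisher information of the Rakhmanov density of the orthonormal Jacobi polynomial with parameters α = 0 and β equals F[ρ_{n,0,β}] = ((2n+β+1)/4) · [ n²/(β+1) + n + (4n+1)(n+β+1) + (n+1)²/(β−1) ]. -/

import Mathlib

open MeasureTheory Real

/-- The Jacobi polynomial `P_n^{(α,β)}`. -/
noncomputable def jacobiP (α β : ℝ) (n : ℕ) (x : ℝ) : ℝ :=
  ∑ s ∈ Finset.range (n + 1),
    (Real.Gamma ((n : ℝ) + α + 1) / (Real.Gamma (α + (s : ℝ) + 1) * ((n - s).factorial : ℝ))) *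
    (Real.Gamma ((n : ℝ) + β + 1) / (Real.Gamma ((n : ℝ) + β - (s : ℝ) + 1) * (s.factorial : ℝ))) *
    ((x - 1) / 2) ^ s * ((x + 1) / 2) ^ (n - s)

/-- The normalization constant `h_n` of the Jacobi polynomials. -/
noncomputable def jacobih (α β : ℝ) (n : ℕ) : ℝ :=
  2 ^ (α + β + 1) * Real.Gamma ((n : ℝ) + α + 1) * Real.Gamma ((n : ℝ) + β + 1) /
    ((2 * (n : ℝ) + α + β + 1) * (n.factorial : ℝ) * Real.Gamma ((n : ℝ) + α + β + 1))

/-- The Rakhmanov density of the orthonormal Jacobi polynomial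
`p_n^{(α,β)}(x) = h_n^{-1/2} P_n^{(α,β)}(x)`, i.e.
`ρ_{n,α,β}(x) = p_n^{(α,β)}(x)^2 (1-x)^α (1+x)^β`. -/
noncomputable def jacobiρ (α β : ℝ) (n : ℕ) (x : ℝ) : ℝ :=
  (jacobiP α β n x) ^ 2 / jacobih α β n * (1 - x) ^ α * (1 + x) ^ β

/-!
Put `x = 2t - 1`, so that `ρ` becomes a multiple of `t ^ β p(t)²` on `(0, 1)` with
`p(t) = P_n^{(0,β)}(2t - 1)`, and the Fisher information a multiple of
`∫ t ^ (β - 2) (2 t p' + β p)²`. For `α = 0` the weight does not vanish at `t = 1`, so integrating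
derivatives by parts leaves the boundary value `p(1) = 1`; the remaining integrals are handled by
the orthogonality of `p` to polynomials of degree less than `n`. Orthogonality, `p'(1)` and
`p'(0) / p(0)`, which are all that is needed, follow from Jacobi's differential equation alone.
-/

open Polynomial Set

section FisherInformation

/-- The Fisher information `F[ρ] = ∫_s ρ'² / ρ` of a density `ρ` on `s`; the zeros of `ρ`
contribute `0` to the integral because of the convention `a / 0 = 0`. -/
noncomputable def fisherInformation (ρ : ℝ → ℝ) (s : Set ℝ) : ℝ :=
  ∫ x in s, deriv ρ x ^ 2 / ρ x

theorem fisherInformation_congr {ρ σ : ℝ → ℝ} {s : Set ℝ} (hs : IsOpen s) (h : s.EqOn ρ σ) :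
    fisherInformation ρ s = fisherInformation σ s :=
  setIntegral_congr_fun hs.measurableSet fun x hx ↦ by
    simp only [h.deriv hs hx, h hx]

theorem fisherInformation_const_mul (c : ℝ) (ρ : ℝ → ℝ) (s : Set ℝ) :
    fisherInformation (fun x ↦ c * ρ x) s = c * fisherInformation ρ s := by
  rw [fisherInformation, fisherInformation, ← integral_const_mul]
  refine integral_congr_ae (.of_forall fun x ↦ ?_)
  beta_reduce
  rw [deriv_const_mul_field]
  rcases eq_or_ne c 0 with rfl | hc
  · simp
  · field_simp

theorem fisherInformation_comp_mul_add {a : ℝ} (ha : 0 < a) (b : ℝ) (ρ : ℝ → ℝ) {s : Set ℝ}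
    (hs : MeasurableSet s) :
    fisherInformation (fun x ↦ ρ (a * x + b)) ((fun x ↦ a * x + b) ⁻¹' s) =
      a * fisherInformation ρ s := by
  have hderiv (x : ℝ) : deriv (fun y ↦ ρ (a * y + b)) x = a * deriv ρ (a * x + b) := by
    rw [deriv_comp_mul_left a (fun y ↦ ρ (y + b)), deriv_comp_add_const, smul_eq_mul]
  set f : ℝ → ℝ := s.indicator fun y ↦ deriv ρ y ^ 2 / ρ y with hf
  have hmeas : Measurable fun x : ℝ ↦ a * x + b := by fun_prop
  calc fisherInformation (fun x ↦ ρ (a * x + b)) ((fun x ↦ a * x + b) ⁻¹' s)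
      = ∫ x, a ^ 2 * f (a * x + b) := by
        rw [fisherInformation, ← integral_indicator (hmeas hs)]
        refine integral_congr_ae (.of_forall fun x ↦ ?_)
        by_cases hx : a * x + b ∈ s
        · simp only [hf, indicator_of_mem, hx, mem_preimage, hderiv]
          ring
        · simp only [hf, indicator_of_notMem, hx, mem_preimage, not_false_eq_true, mul_zero]
    _ = a ^ 2 * (|a⁻¹| * ∫ y, f y) := by
        rw [integral_const_mul, Measure.integral_comp_mul_left (fun y ↦ f (y + b)),
          integral_add_right_eq_self f b, smul_eq_mul]
    _ = a * fisherInformation ρ s := by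
        rw [integral_indicator hs, abs_of_pos (inv_pos.mpr ha), fisherInformation]
        field_simp

end FisherInformation

section WeightedIntegral

/-- The functional `p ↦ ∫₀¹ p(t) t ^ s dt` on polynomials, see `integral_eval_mul_rpow`. It is given
by its moments `1 / (k + s + 1)`, which makes it linear without integrability side conditions. -/
noncomputable def weightedIntegral (s : ℝ) : ℝ[X] →ₗ[ℝ] ℝ :=
  Polynomial.lsum fun k ↦ ((k : ℝ) + s + 1)⁻¹ • LinearMap.id

theorem weightedIntegral_monomial (s : ℝ) (k : ℕ) (a : ℝ) :
    weightedIntegral s (monomial k a) = a / (k + s + 1) := by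
  simp [weightedIntegral, Polynomial.sum_monomial_index, div_eq_inv_mul]

theorem weightedIntegral_X_mul (s : ℝ) (p : ℝ[X]) :
    weightedIntegral s (X * p) = weightedIntegral (s + 1) p := by
  induction p using Polynomial.induction_on' with
  | add p q hp hq => rw [mul_add, map_add, map_add, hp, hq]
  | monomial k a =>
    rw [X_mul_monomial, weightedIntegral_monomial, weightedIntegral_monomial]
    push_cast
    ring_nf

theorem weightedIntegral_C_mul (s a : ℝ) (p : ℝ[X]) :
    weightedIntegral s (C a * p) = a * weightedIntegral s p := by
  rw [← smul_eq_C_mul, map_smul, smul_eq_mul]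

theorem weightedIntegral_derivative {s : ℝ} (hs : -1 < s) (p : ℝ[X]) :
    weightedIntegral (s + 1) (derivative p) = p.eval 1 - (s + 1) * weightedIntegral s p := by
  induction p using Polynomial.induction_on' with
  | add p q hp hq => rw [derivative_add, map_add, map_add, hp, hq, eval_add]; ring
  | monomial k a =>
    rw [derivative_monomial, weightedIntegral_monomial, weightedIntegral_monomial, eval_monomial]
    have hks : (k : ℝ) + s + 1 ≠ 0 := by linarith [k.cast_nonneg (α := ℝ)]
    rcases k with _ | k
    · simp only [Nat.cast_zero, zero_add] at hks
      simp [field]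
    · push_cast at hks ⊢
      have hks' : (k : ℝ) + (s + 1) + 1 ≠ 0 := by convert hks using 1; ring
      simp only [one_pow]
      field_simp
      ring

theorem intervalIntegrable_eval_mul_rpow {s : ℝ} (hs : -1 < s) (p : ℝ[X]) (a b : ℝ) :
    IntervalIntegrable (fun t ↦ p.eval t * t ^ s) volume a b :=
  (intervalIntegral.intervalIntegrable_rpow' hs).continuousOn_mul p.continuous.continuousOn

theorem integral_eval_mul_rpow {s : ℝ} (hs : -1 < s) (p : ℝ[X]) :
    ∫ t in (0 : ℝ)..1, p.eval t * t ^ s = weightedIntegral s p := by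
  induction p using Polynomial.induction_on' with
  | add p q hp hq =>
    simp only [eval_add, add_mul, map_add]
    rw [intervalIntegral.integral_add (intervalIntegrable_eval_mul_rpow hs p 0 1)
      (intervalIntegrable_eval_mul_rpow hs q 0 1), hp, hq]
  | monomial k a =>
    have hks : -1 < (k : ℝ) + s := by linarith [k.cast_nonneg (α := ℝ)]
    have hrpow : ∀ t ∈ uIoc (0 : ℝ) 1, (monomial k a).eval t * t ^ s = a * t ^ ((k : ℝ) + s) := by
      intro t ht
      rw [uIoc_of_le zero_le_one] at ht
      rw [eval_monomial, rpow_add ht.1, rpow_natCast, mul_assoc]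
    rw [intervalIntegral.integral_congr_ae (.of_forall hrpow), intervalIntegral.integral_const_mul,
      integral_rpow (.inl hks), weightedIntegral_monomial, one_rpow, zero_rpow (by linarith)]
    ring

end WeightedIntegral

section FisherInformationSqMulRpow

theorem ae_eval_ne_zero {p : ℝ[X]} (hp : p ≠ 0) : ∀ᵐ t : ℝ, p.eval t ≠ 0 := by
  have hfin : {t : ℝ | p.IsRoot t}.Finite := finite_setOfPred_isRoot hp
  filter_upwards [hfin.measure_zero volume |> compl_mem_ae_iff.mpr] with t ht using ht

theorem deriv_eval_sq_mul_rpow (p : ℝ[X]) (β : ℝ) {t : ℝ} (ht : t ≠ 0) :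
    deriv (fun t ↦ p.eval t ^ 2 * t ^ β) t =
      p.eval t * (2 * X * derivative p + C β * p).eval t * t ^ (β - 1) := by
  have hd := ((p.hasDerivAt t).pow 2).mul (hasDerivAt_rpow_const (p := β) (.inl ht))
  refine hd.deriv.trans ?_
  have hrpow : t ^ β = t * t ^ (β - 1) := by
    rw [rpow_sub_one ht]
    field_simp
  simp only [eval_add, eval_mul, eval_ofNat, eval_X, eval_C, Pi.pow_apply, hrpow]
  ring

theorem fisherInformation_eval_sq_mul_rpow {p : ℝ[X]} (hp : p ≠ 0) {β : ℝ} (hβ : 1 < β) :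
    fisherInformation (fun t ↦ p.eval t ^ 2 * t ^ β) (Ioo 0 1) =
      weightedIntegral (β - 2) ((2 * X * derivative p + C β * p) ^ 2) := by
  rw [← integral_eval_mul_rpow (by linarith), intervalIntegral.integral_of_le zero_le_one,
    integral_Ioc_eq_integral_Ioo, fisherInformation]
  apply setIntegral_congr_ae measurableSet_Ioo
  filter_upwards [ae_eval_ne_zero hp] with t hpt ht
  have hpow : t ^ β ≠ 0 := (rpow_pos_of_pos ht.1 β).ne'
  have ht0 : t ≠ 0 := ht.1.ne'
  rw [deriv_eval_sq_mul_rpow p β ht0, eval_pow, rpow_sub_one ht0, rpow_sub ht.1, rpow_two]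
  field_simp

end FisherInformationSqMulRpow

section JacobiOp

/-- Jacobi's differential operator for `α = 0` in the variable `t = (1 + x) / 2`,
`p ↦ t ^ (-β) (t ^ (β + 1) (1 - t) p')' = (t (1 - t) p')' + β (1 - t) p'`. -/
noncomputable def jacobiOp (β : ℝ) : ℝ[X] →ₗ[ℝ] ℝ[X] :=
  (derivative ∘ₗ LinearMap.mulLeft ℝ X + β • LinearMap.id) ∘ₗ
    LinearMap.mulLeft ℝ (1 - X) ∘ₗ derivative

variable {β : ℝ}

theorem jacobiOp_apply (β : ℝ) (p : ℝ[X]) :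
    jacobiOp β p = derivative (X * ((1 - X) * derivative p)) +
      C β * ((1 - X) * derivative p) := by
  simp [jacobiOp, smul_eq_C_mul]

theorem eval_one_jacobiOp (β : ℝ) (p : ℝ[X]) :
    (jacobiOp β p).eval 1 = -(derivative p).eval 1 := by
  simp [jacobiOp_apply]

theorem eval_zero_jacobiOp (β : ℝ) (p : ℝ[X]) :
    (jacobiOp β p).eval 0 = (β + 1) * (derivative p).eval 0 := by
  simp [jacobiOp_apply, add_mul, add_comm]

theorem jacobiOp_X_pow (β : ℝ) (k : ℕ) :
    jacobiOp β (X ^ k) =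
      C (k * (k + β) : ℝ) * X ^ (k - 1) - C (k * (k + β + 1) : ℝ) * X ^ k := by
  rcases k with _ | _ | k
  · simp [jacobiOp_apply]
  · simp only [zero_add, pow_one, jacobiOp_apply, derivative_X, mul_one, derivative_mul, one_mul,
      derivative_sub, derivative_one, zero_sub, mul_neg, Nat.cast_one, map_add, map_one, tsub_self,
      pow_zero]
    ring
  · simp only [jacobiOp_apply, derivative_X_pow_succ, Nat.cast_add, Nat.cast_one, map_add,
      map_natCast, map_one, derivative_mul, derivative_X, one_mul, derivative_sub, derivative_one,
      zero_sub, neg_mul, derivative_natCast, add_zero, zero_mul, zero_add, map_mul,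
      add_tsub_cancel_right]
    ring

theorem weightedIntegral_jacobiOp_mul (hβ : -1 < β) (p q : ℝ[X]) :
    weightedIntegral β (jacobiOp β p * q) =
      -weightedIntegral β (X * ((1 - X) * (derivative p * derivative q))) := by
  set w := (1 - X) * derivative p with hw
  have hsplit : jacobiOp β p * q =
      X * derivative (w * q) + C (β + 1) * (w * q) -
        X * ((1 - X) * (derivative p * derivative q)) := by
    rw [jacobiOp_apply, ← hw]
    simp only [derivative_mul, derivative_X, C_add, C_1]
    linear_combination (-X * derivative q) * hw
  have hw1 : (w * q).eval 1 = 0 := by simp [hw]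
  rw [hsplit, map_sub, map_add, weightedIntegral_X_mul, weightedIntegral_derivative hβ,
    weightedIntegral_C_mul, hw1]
  ring

theorem weightedIntegral_jacobiOp_mul_comm (hβ : -1 < β) (p q : ℝ[X]) :
    weightedIntegral β (jacobiOp β p * q) = weightedIntegral β (p * jacobiOp β q) := by
  rw [mul_comm p, weightedIntegral_jacobiOp_mul hβ, weightedIntegral_jacobiOp_mul hβ,
    mul_comm (derivative p)]

end JacobiOp

section Eigenpolynomial

variable {β : ℝ} {n : ℕ} {p : ℝ[X]}

/-- A polynomial of degree at most `n` solving Jacobi's differential equation for `α = 0` in the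
variable `t = (1 + x) / 2`, that is, for `β > -1`, a multiple of `P_n^{(0,β)}(2t - 1)`. -/
structure IsJacobiEigenpolynomial (β : ℝ) (n : ℕ) (p : ℝ[X]) : Prop where
  natDegree_le : p.natDegree ≤ n
  jacobiOp_eq : jacobiOp β p = -C (n * (n + β + 1) : ℝ) * p

namespace IsJacobiEigenpolynomial

theorem eval_one_derivative (hp : IsJacobiEigenpolynomial β n p) :
    (derivative p).eval 1 = n * (n + β + 1) * p.eval 1 := by
  have h := eval_one_jacobiOp β p
  rw [hp.jacobiOp_eq, eval_mul, eval_neg, eval_C] at h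
  linarith

theorem eval_zero_derivative (hp : IsJacobiEigenpolynomial β n p) (hβ : β + 1 ≠ 0) :
    (derivative p).eval 0 = -(n * (n + β + 1) / (β + 1)) * p.eval 0 := by
  have h := eval_zero_jacobiOp β p
  rw [hp.jacobiOp_eq, eval_mul, eval_neg, eval_C] at h
  field_simp
  linarith

theorem weightedIntegral_X_pow_mul (hp : IsJacobiEigenpolynomial β n p) (hβ : -1 < β) {k : ℕ}
    (hk : k < n) : weightedIntegral β (X ^ k * p) = 0 := by
  induction k using Nat.strong_induction_on with | _ k ih
  have hlower : k * (k + β) * weightedIntegral β (X ^ (k - 1) * p) = 0 := by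
    rcases k with _ | k
    · simp
    · rw [Nat.add_sub_cancel, ih k k.lt_succ_self (Nat.lt_of_succ_lt hk), mul_zero]
  have hsymm := weightedIntegral_jacobiOp_mul_comm hβ (X ^ k) p
  rw [hp.jacobiOp_eq, jacobiOp_X_pow, sub_mul, map_sub, mul_assoc, mul_assoc,
    weightedIntegral_C_mul, weightedIntegral_C_mul, mul_left_comm, ← C_neg,
    weightedIntegral_C_mul] at hsymm
  have hkn : (k : ℝ) + 1 ≤ n := by exact_mod_cast hk
  have hgap : ((n : ℝ) - k) * (n + k + β + 1) ≠ 0 :=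
    mul_ne_zero (by linarith) (by linarith [k.cast_nonneg (α := ℝ)])
  apply (mul_eq_zero.mp _).resolve_left hgap
  linear_combination hsymm - hlower

theorem weightedIntegral_mul_eq_zero (hp : IsJacobiEigenpolynomial β n p) (hβ : -1 < β)
    {q : ℝ[X]} (hq : q.degree < n) : weightedIntegral β (q * p) = 0 := by
  rw [q.as_sum_support_C_mul_X_pow, Finset.sum_mul, map_sum]
  refine Finset.sum_eq_zero fun k hk ↦ ?_
  have hkn : k < n := by
    exact_mod_cast (le_degree_of_mem_supp k hk).trans_lt hq
  rw [mul_assoc, weightedIntegral_C_mul, hp.weightedIntegral_X_pow_mul hβ hkn, mul_zero]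

theorem coeff_eq_zero (hp : IsJacobiEigenpolynomial β n p) {k : ℕ} (hk : n < k) :
    p.coeff k = 0 :=
  coeff_eq_zero_of_natDegree_lt (hp.natDegree_le.trans_lt hk)

theorem degree_derivative_lt (hp : IsJacobiEigenpolynomial β n p) :
    (derivative p).degree < n := by
  rw [degree_lt_iff_coeff_zero]
  intro k hk
  rw [coeff_derivative, hp.coeff_eq_zero (Nat.lt_succ_of_le hk), zero_mul]

theorem weightedIntegral_sub_one_mul_self (hp : IsJacobiEigenpolynomial β n p) (hβ : 0 < β) :
    weightedIntegral (β - 1) (p * p) = p.eval 1 ^ 2 / β := by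
  have hparts := weightedIntegral_derivative (s := β - 1) (by linarith) (p * p)
  have horth := hp.weightedIntegral_mul_eq_zero (by linarith) hp.degree_derivative_lt
  rw [sub_add_cancel, derivative_mul, mul_comm p (derivative p), map_add, horth, eval_mul]
    at hparts
  rw [eq_div_iff hβ.ne']
  linarith

theorem weightedIntegral_sub_one_derivative_mul_self (hp : IsJacobiEigenpolynomial β n p)
    (hβ : 0 < β) :
    weightedIntegral (β - 1) (derivative p * p) =
      -(n * (n + β + 1) / (β + 1)) * (p.eval 1 ^ 2 / β) := by
  -- The multiple of `p` subtracted from `p'` makes the difference divisible by `t`, which turns the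
  -- weight `t ^ (β - 1)` into the weight `t ^ β` of the orthogonality relation.
  set r : ℝ := -(n * (n + β + 1) / (β + 1))
  set d := derivative p - C r * p with hd
  have hd0 : d.coeff 0 = 0 := by
    rw [coeff_zero_eq_eval_zero, hd, eval_sub, eval_mul, eval_C,
      hp.eval_zero_derivative (by positivity), sub_self]
  have hdivX : (divX d).degree < n := by
    rw [degree_lt_iff_coeff_zero]
    intro k hk
    rw [coeff_divX, hd, coeff_sub, coeff_C_mul, coeff_derivative,
      hp.coeff_eq_zero (by lia), hp.coeff_eq_zero (by lia)]
    ring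
  have hsplit : derivative p * p = C r * (p * p) + X * (divX d * p) := by
    have h := X_mul_divX_add d
    rw [hd0, C_0, add_zero] at h
    linear_combination p * hd - p * h
  rw [hsplit, map_add, weightedIntegral_C_mul, hp.weightedIntegral_sub_one_mul_self hβ,
    weightedIntegral_X_mul, sub_add_cancel,
    hp.weightedIntegral_mul_eq_zero (by linarith) hdivX, add_zero]

theorem weightedIntegral_derivative_sq (hp : IsJacobiEigenpolynomial β n p) (hβ : 0 < β) :
    weightedIntegral β (derivative p * derivative p) =
      n * (n + β + 1) * (β + 2) / (β + 1) * p.eval 1 ^ 2 := by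
  have hparts := weightedIntegral_derivative (s := β - 1) (by linarith) (derivative p * p)
  have hdeg : (derivative (derivative p)).degree < n :=
    degree_derivative_le.trans_lt hp.degree_derivative_lt
  rw [sub_add_cancel, derivative_mul, map_add,
    hp.weightedIntegral_mul_eq_zero (by linarith) hdeg, zero_add, eval_mul,
    hp.eval_one_derivative, hp.weightedIntegral_sub_one_derivative_mul_self hβ] at hparts
  rw [hparts]
  field_simp
  ring

theorem weightedIntegral_sub_two_mul_self (hp : IsJacobiEigenpolynomial β n p) (hβ : 1 < β) :
    weightedIntegral (β - 2) (p * p) =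
      (1 + 2 * n * (n + β + 1) / (β * (β + 1))) / (β - 1) * p.eval 1 ^ 2 := by
  have hparts := weightedIntegral_derivative (s := β - 2) (by linarith) (p * p)
  rw [show β - 2 + 1 = β - 1 by ring, derivative_mul, mul_comm p (derivative p), map_add,
    hp.weightedIntegral_sub_one_derivative_mul_self (by linarith), eval_mul] at hparts
  have hβ1 : β - 1 ≠ 0 := by linarith
  field_simp at hparts ⊢
  linear_combination hparts

theorem weightedIntegral_sq (hp : IsJacobiEigenpolynomial β n p) (hβ : 1 < β) :
    weightedIntegral (β - 2) ((2 * X * derivative p + C β * p) ^ 2) =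
      ((n : ℝ) ^ 2 / (β + 1) + n + (4 * n + 1) * (n + β + 1) + ((n : ℝ) + 1) ^ 2 / (β - 1)) *
        p.eval 1 ^ 2 := by
  have hexpand : (2 * X * derivative p + C β * p) ^ 2 =
      C 4 * (X * (X * (derivative p * derivative p))) +
        C (4 * β) * (X * (derivative p * p)) + C (β ^ 2) * (p * p) := by
    simp only [C_mul, C_pow, C_ofNat]
    ring
  have hβ0 : 0 < β := by linarith
  have hβ1 : β - 1 ≠ 0 := by linarith
  rw [hexpand]
  simp only [map_add, weightedIntegral_C_mul, weightedIntegral_X_mul]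
  rw [show β - 2 + 1 = β - 1 by ring, sub_add_cancel, hp.weightedIntegral_derivative_sq hβ0,
    hp.weightedIntegral_sub_one_derivative_mul_self hβ0, hp.weightedIntegral_sub_two_mul_self hβ]
  field_simp
  ring

end IsJacobiEigenpolynomial

end Eigenpolynomial

section ShiftedJacobi

theorem succ_mul_ringChoose_succ {R : Type*} [CommRing R] [BinomialRing R] (x : R) (k : ℕ) :
    (k + 1) * Ring.choose x (k + 1) = (x - k) * Ring.choose x k := by
  have h := Ring.choose_smul_choose x k.le_succ
  rw [Nat.choose_succ_self_right, nsmul_eq_mul, Nat.succ_sub (le_refl k), Nat.sub_self,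
    Ring.choose_one_right] at h
  push_cast at h
  rw [h, mul_comm]

theorem ringChoose_eq_Gamma_div {x : ℝ} {k : ℕ} (h : (k : ℝ) < x + 1) :
    Ring.choose x k = Gamma (x + 1) / (Gamma (x - k + 1) * k.factorial) := by
  induction k with
  | zero =>
    have : Gamma (x + 1) ≠ 0 := (Gamma_pos_of_pos (by simpa using h)).ne'
    simp [this]
  | succ k ih =>
    push_cast at h
    have hxk : 0 < x - k := by linarith
    have hrec := succ_mul_ringChoose_succ x k
    rw [ih (by linarith), Gamma_add_one hxk.ne'] at hrec
    have hΓ : Gamma (x - k) ≠ 0 := (Gamma_pos_of_pos hxk).ne'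
    rw [Nat.factorial_succ]
    push_cast
    rw [show x - (k + 1) + 1 = x - k by ring]
    field_simp at hrec ⊢
    linarith

/-- The coefficient of `((x - 1) / 2) ^ j * ((x + 1) / 2) ^ (n - j)` in `P_n^{(0,β)}(x)`. -/
noncomputable def jacobiCoeff (β : ℝ) (n j : ℕ) : ℝ :=
  n.choose j * Ring.choose ((n : ℝ) + β) j

theorem jacobiCoeff_succ (β : ℝ) (n j : ℕ) :
    ((j : ℝ) + 1) ^ 2 * jacobiCoeff β n (j + 1) = (n - j) * (n + β - j) * jacobiCoeff β n j := by
  have hn := succ_mul_ringChoose_succ (n : ℝ) j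
  have hnβ := succ_mul_ringChoose_succ ((n : ℝ) + β) j
  rw [Ring.choose_natCast, Ring.choose_natCast] at hn
  rw [jacobiCoeff, jacobiCoeff]
  linear_combination (j + 1) * Ring.choose ((n : ℝ) + β) (j + 1) * hn + (n - j) * n.choose j * hnβ

/-- The polynomial `P_n^{(0,β)}(2t - 1)` in the variable `t`. -/
noncomputable def shiftedJacobi (β : ℝ) (n : ℕ) : ℝ[X] :=
  ∑ j ∈ Finset.range (n + 1), C (jacobiCoeff β n j) * (X ^ (n - j) * (X - 1) ^ j)

variable {β : ℝ}

theorem jacobiP_two_mul_sub_one (hβ : -1 < β) (n : ℕ) (t : ℝ) :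
    jacobiP 0 β n (2 * t - 1) = (shiftedJacobi β n).eval t := by
  rw [jacobiP, shiftedJacobi, eval_finsetSum]
  refine Finset.sum_congr rfl fun j hj ↦ ?_
  have hjn : j ≤ n := Nat.lt_succ_iff.mp (Finset.mem_range.mp hj)
  have hjn' : (j : ℝ) ≤ n := by exact_mod_cast hjn
  rw [jacobiCoeff, ringChoose_eq_Gamma_div (by linarith), Nat.cast_choose ℝ hjn]
  simp only [add_zero, zero_add, Gamma_nat_eq_factorial, eval_mul, eval_C, eval_pow, eval_X,
    eval_sub, eval_one]
  ring_nf

theorem eval_one_shiftedJacobi (β : ℝ) (n : ℕ) : (shiftedJacobi β n).eval 1 = 1 := by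
  rw [shiftedJacobi, eval_finsetSum, Finset.sum_range_succ']
  simp [jacobiCoeff]

theorem natDegree_shiftedJacobi_le (β : ℝ) (n : ℕ) : (shiftedJacobi β n).natDegree ≤ n := by
  refine natDegree_sum_le_of_forall_le _ _ fun j hj ↦ ?_
  have hjn : j ≤ n := Nat.lt_succ_iff.mp (Finset.mem_range.mp hj)
  calc natDegree (C (jacobiCoeff β n j) * (X ^ (n - j) * (X - 1) ^ j))
      ≤ natDegree (X ^ (n - j) * (X - 1) ^ j : ℝ[X]) := natDegree_C_mul_le _ _
    _ ≤ (n - j) + j := by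
        refine natDegree_mul_le.trans (add_le_add (natDegree_X_pow_le _) ?_)
        rw [← C_1, natDegree_pow, natDegree_X_sub_C, mul_one]
    _ = n := Nat.sub_add_cancel hjn

theorem jacobiOp_X_pow_mul_X_sub_one_pow (β : ℝ) (a b : ℕ) :
    jacobiOp β (X ^ a * (X - 1) ^ b) =
      -(C (a * (a + β) : ℝ) * (X ^ (a - 1) * (X - 1) ^ (b + 1)) +
        C (2 * a * b + a + (β + 1) * b : ℝ) * (X ^ a * (X - 1) ^ b) +
        C ((b : ℝ) ^ 2) * (X ^ (a + 1) * (X - 1) ^ (b - 1))) := by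
  have hw : (1 - X) * derivative (X ^ a * (X - 1) ^ b : ℝ[X]) =
      -(C (a : ℝ) * (X ^ (a - 1) * (X - 1) ^ (b + 1)) + C (b : ℝ) * (X ^ a * (X - 1) ^ b)) := by
    rcases b with _ | b
    · simp only [pow_zero, mul_one, derivative_X_pow, zero_add, pow_one, Nat.cast_zero, C_0,
        zero_mul, add_zero]
      ring
    · simp only [derivative_mul, derivative_pow, map_natCast, derivative_X, mul_one, Nat.cast_add,
        Nat.cast_one, map_add, map_one, add_tsub_cancel_right, derivative_sub, derivative_one,
        sub_zero]
      ring
  have hXw : X * ((1 - X) * derivative (X ^ a * (X - 1) ^ b : ℝ[X])) =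
      -(C (a : ℝ) * (X ^ a * (X - 1) ^ (b + 1)) + C (b : ℝ) * (X ^ (a + 1) * (X - 1) ^ b)) := by
    rw [hw]
    rcases a with _ | a
    · simp only [Nat.cast_zero, C_0, pow_zero, zero_mul, zero_add, one_mul, pow_one, mul_neg,
        mul_left_comm]
    · simp only [add_tsub_cancel_right]
      ring
  rw [jacobiOp_apply, hXw, hw]
  simp only [map_natCast, derivative_neg, derivative_mul, derivative_natCast, zero_mul,
    derivative_pow, Nat.cast_add, Nat.cast_one, map_add, map_one, add_tsub_cancel_right,
    derivative_X, mul_one, derivative_sub, derivative_one, sub_zero, zero_add, map_mul, C_ofNat,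
    map_pow]
  ring

theorem sum_jacobiCoeff_mul_raise (β : ℝ) (n : ℕ) :
    ∑ j ∈ Finset.range (n + 1), C (jacobiCoeff β n j) *
        (C (↑(n - j) * (↑(n - j) + β)) * (X ^ (n - j - 1) * (X - 1) ^ (j + 1))) =
      ∑ j ∈ Finset.range (n + 1),
        C ((j : ℝ) ^ 2 * jacobiCoeff β n j) * (X ^ (n - j) * (X - 1) ^ j) := by
  set F : ℕ → ℝ[X] := fun j ↦
    C ((j : ℝ) ^ 2 * jacobiCoeff β n j) * (X ^ (n - j) * (X - 1) ^ j) with hF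
  have hF0 : F 0 = 0 := by simp [hF]
  have hFn : F (n + 1) = 0 := by simp [hF, jacobiCoeff]
  have hshift := (Finset.sum_range_succ' F (n + 1)).symm.trans (Finset.sum_range_succ F (n + 1))
  rw [hF0, hFn, add_zero, add_zero] at hshift
  rw [← hshift]
  refine Finset.sum_congr rfl fun j hj ↦ ?_
  have hjn : j ≤ n := Nat.lt_succ_iff.mp (Finset.mem_range.mp hj)
  simp only [hF, Nat.cast_succ, jacobiCoeff_succ]
  rw [← mul_assoc, ← C_mul, Nat.sub_sub, Nat.cast_sub hjn]
  ring_nf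

theorem sum_jacobiCoeff_mul_lower (β : ℝ) (n : ℕ) :
    ∑ j ∈ Finset.range (n + 1), C (jacobiCoeff β n j) *
        (C ((j : ℝ) ^ 2) * (X ^ (n - j + 1) * (X - 1) ^ (j - 1))) =
      ∑ j ∈ Finset.range (n + 1),
        C ((n - j) * (n + β - j) * jacobiCoeff β n j) * (X ^ (n - j) * (X - 1) ^ j) := by
  rw [Finset.sum_range_succ', Finset.sum_range_succ _ n]
  congr 1
  · refine Finset.sum_congr rfl fun j hj ↦ ?_
    have hjn : n - (j + 1) + 1 = n - j := by
      have := Finset.mem_range.mp hj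
      lia
    rw [← mul_assoc, ← C_mul, hjn, Nat.add_sub_cancel, ← jacobiCoeff_succ, Nat.cast_succ,
      mul_comm (jacobiCoeff β n (j + 1))]
  · simp

theorem jacobiOp_shiftedJacobi (β : ℝ) (n : ℕ) :
    jacobiOp β (shiftedJacobi β n) = -C (n * (n + β + 1) : ℝ) * shiftedJacobi β n := by
  rw [shiftedJacobi, map_sum]
  simp only [← smul_eq_C_mul (jacobiCoeff β n _), map_smul]
  simp only [smul_eq_C_mul, jacobiOp_X_pow_mul_X_sub_one_pow, mul_neg,
    mul_add (C (jacobiCoeff β n _)), Finset.sum_neg_distrib, Finset.sum_add_distrib]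
  rw [sum_jacobiCoeff_mul_raise, sum_jacobiCoeff_mul_lower, ← Finset.sum_add_distrib,
    ← Finset.sum_add_distrib, neg_mul, Finset.mul_sum, neg_inj]
  refine Finset.sum_congr rfl fun j hj ↦ ?_
  have hjn : j ≤ n := Nat.lt_succ_iff.mp (Finset.mem_range.mp hj)
  rw [Nat.cast_sub hjn]
  simp only [← mul_assoc, ← add_mul, ← C_mul, ← C_add]
  ring_nf

theorem isJacobiEigenpolynomial_shiftedJacobi (β : ℝ) (n : ℕ) :
    IsJacobiEigenpolynomial β n (shiftedJacobi β n) where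
  natDegree_le := natDegree_shiftedJacobi_le β n
  jacobiOp_eq := jacobiOp_shiftedJacobi β n

theorem shiftedJacobi_ne_zero (β : ℝ) (n : ℕ) : shiftedJacobi β n ≠ 0 := by
  intro h
  simpa [h] using eval_one_shiftedJacobi β n

end ShiftedJacobi

section RakhmanovDensity

variable {β : ℝ}

theorem jacobih_alpha_zero (hβ : -1 < β) (n : ℕ) :
    jacobih 0 β n = 2 ^ (β + 1) / (2 * n + β + 1) := by
  have hΓ : Gamma ((n : ℝ) + β + 1) ≠ 0 :=
    (Gamma_pos_of_pos (by linarith [n.cast_nonneg (α := ℝ)])).ne'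
  simp only [jacobih, add_zero, zero_add, Gamma_nat_eq_factorial]
  field_simp

theorem jacobiρ_two_mul_sub_one (hβ : -1 < β) (n : ℕ) {t : ℝ} (ht : 0 ≤ t) :
    jacobiρ 0 β n (2 * t - 1) =
      (2 * n + β + 1) / 2 * ((shiftedJacobi β n).eval t ^ 2 * t ^ β) := by
  rw [jacobiρ, jacobiP_two_mul_sub_one hβ, jacobih_alpha_zero hβ, rpow_zero,
    show 1 + (2 * t - 1) = 2 * t by ring, mul_rpow zero_le_two ht, rpow_add_one two_ne_zero]
  field_simp

theorem fisherInformation_jacobiρ (hβ : -1 < β) (n : ℕ) :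
    fisherInformation (jacobiρ 0 β n) (Ioo (-1) 1) =
      (2 * n + β + 1) / 4 *
        fisherInformation (fun t ↦ (shiftedJacobi β n).eval t ^ 2 * t ^ β) (Ioo 0 1) := by
  have hscale := fisherInformation_comp_mul_add two_pos (-1) (jacobiρ 0 β n)
    (measurableSet_Ioo (a := -1) (b := 1))
  simp only [← sub_eq_add_neg] at hscale
  have hpre : (fun t : ℝ ↦ 2 * t - 1) ⁻¹' Ioo (-1) 1 = Ioo 0 1 := by
    ext t
    simp only [mem_preimage, mem_Ioo]
    constructor <;> rintro ⟨h₁, h₂⟩ <;> constructor <;> linarith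
  rw [hpre, fisherInformation_congr isOpen_Ioo fun t ht ↦ jacobiρ_two_mul_sub_one hβ n ht.1.le,
    fisherInformation_const_mul] at hscale
  linarith

end RakhmanovDensity

/-- For every `n ∈ ℕ` and real `β > 1`, the Fisher information of the
Rakhmanov density of the orthonormal Jacobi polynomial with `α = 0` equals
`((2n+β+1)/4)·[n²/(β+1) + n + (4n+1)(n+β+1) + (n+1)²/(β−1)]`. -/
theorem jacobi_fisher_alpha_zero (n : ℕ) (β : ℝ) (hβ : 1 < β) :
    (∫ x in Set.Ioo (-1 : ℝ) 1, (deriv (jacobiρ 0 β n) x) ^ 2 / jacobiρ 0 β n x) =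
      (2 * (n : ℝ) + β + 1) / 4 *
        ((n : ℝ) ^ 2 / (β + 1) + (n : ℝ) + (4 * (n : ℝ) + 1) * ((n : ℝ) + β + 1) +
          ((n : ℝ) + 1) ^ 2 / (β - 1)) := by
  have hp := isJacobiEigenpolynomial_shiftedJacobi β n
  change fisherInformation (jacobiρ 0 β n) (Ioo (-1) 1) = _
  rw [fisherInformation_jacobiρ (by linarith),
    fisherInformation_eval_sq_mul_rpow (shiftedJacobi_ne_zero β n) hβ,
    hp.weightedIntegral_sq hβ, eval_one_shiftedJacobi, one_pow, mul_one]
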